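/- Let τ ∈ ℂ with Im τ > 0 and define the Jacobi theta functions θ₁, θ₂, θ₃, θ₄ (with parameter τ) as in the context. Let η, z ∈ ℂ and assume θ_j(η) ≠ 0 for j = 1,2,3,4. Set Z₀ = θ₁(2z)/θ₁(η), Z₁ = θ₂(2z)/θ₂(η), Z₂ = θ₃(2z)/θ₃(η), Z₃ = θ₄(2z)/θ₄(η). Then (θ₂(η)²/θ₂(0)²)·(Z₀² − Z₁²) = (θ₃(η)²/θ₃(0)²)·(Z₀² − Z₂²) = (θ₄(η)²/θ₄(0)²)·(Z₀² − Z₃²); that is, the point (Z₀,Z₁,Z₂,Z₃) lies on the biquadratic curve (Z₀²−Z₁²)/a = (Z₀²−Z₂²)/b = (Z₀²−Z₃²)/c with a = θ₂(0)²/θ₂(η)², b = θ₃(0)²/θ₃(η)², c = θ₄(0)²/θ₄(η)². -/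

import Mathlib

/-- `θ₃(z) = Σ_{n∈ℤ} q^{n²} e^{2πinz}` with `q = exp(πiτ)`. -/
noncomputable def theta3 (τ z : ℂ) : ℂ := jacobiTheta₂ z τ

/-- `θ₄(z) = θ₃(z + 1/2)`. -/
noncomputable def theta4 (τ z : ℂ) : ℂ := jacobiTheta₂ (z + 1 / 2) τ

/-- `θ₂(z) = q^{1/4} e^{πiz} θ₃(z + τ/2)`. -/
noncomputable def theta2 (τ z : ℂ) : ℂ :=
  Complex.exp ((Real.pi : ℂ) * Complex.I * τ / 4) *
    Complex.exp ((Real.pi : ℂ) * Complex.I * z) * jacobiTheta₂ (z + τ / 2) τ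

/-- `θ₁(z) = −i q^{1/4} e^{πiz} θ₃(z + 1/2 + τ/2)`. -/
noncomputable def theta1 (τ z : ℂ) : ℂ :=
  -Complex.I * Complex.exp ((Real.pi : ℂ) * Complex.I * τ / 4) *
    Complex.exp ((Real.pi : ℂ) * Complex.I * z) *
    jacobiTheta₂ (z + 1 / 2 + τ / 2) τ

/-!
Sorting the double series for `θ₃(x) θ₃(y)` by the parity of the sum of its indices expresses the
product through theta functions of doubled parameter at `x + y` and `x - y`. Translating `x` and `y`
by half periods gives similar formulas for the other products, and eliminating the doubled
parameter yields the addition formulas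
`θ₁(u)² θⱼ(v)² - θⱼ(u)² θ₁(v)² = θⱼ(0)² θ₁(u + v) θ₁(u - v)` for `j = 2, 3, 4`. Hence, with `u = 2z`
and `v = η`, all three quantities equal `θ₁(2z + η) θ₁(2z - η) / θ₁(η)²`.

The theta constants `θⱼ(0)` do not vanish: `θ₃(0)²` and `θ₄(0)²` are transformed by `τ ↦ 2τ` as in
the arithmetic-geometric mean iteration, so `θ₄(0 ∣ τ) = 0` or `θ₃(0 ∣ τ) = 0` would contradict
`θ₃(0 ∣ 2ⁿτ) → 1`; the constant `θ₂(0)` reduces to `θ₄(0)` by the substitution `τ ↦ -1/τ`.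
-/

section Theta

open Complex Filter
open scoped Real Topology

lemma theta3_add_half (τ z : ℂ) : theta3 τ (z + 1 / 2) = theta4 τ z := rfl

lemma theta3_add_one (τ z : ℂ) : theta3 τ (z + 1) = theta3 τ z := jacobiTheta₂_add_left z τ

lemma theta3_sub_half (τ z : ℂ) : theta3 τ (z - 1 / 2) = theta4 τ z := by
  rw [← theta3_add_one, ← theta3_add_half]
  congr 1
  ring

lemma theta2_add_half (τ z : ℂ) : theta2 τ (z + 1 / 2) = -theta1 τ z := by
  have hexp : cexp (π * I * (z + 1 / 2)) = I * cexp (π * I * z) := by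
    rw [mul_add, Complex.exp_add, mul_comm, show (π * I * (1 / 2) : ℂ) = π / 2 * I by ring,
      exp_pi_div_two_mul_I]
  rw [theta2, theta1, hexp]
  ring

lemma theta2_add_one (τ z : ℂ) : theta2 τ (z + 1) = -theta2 τ z := by
  have hexp : cexp (π * I * (z + 1)) = -cexp (π * I * z) := by
    rw [mul_add, mul_one, Complex.exp_add, exp_pi_mul_I, mul_neg_one]
  rw [theta2, theta2, hexp, add_right_comm, jacobiTheta₂_add_left]
  ring

lemma theta2_sub_half (τ z : ℂ) : theta2 τ (z - 1 / 2) = theta1 τ z := by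
  rw [← neg_neg (theta1 τ z), ← theta2_add_half, ← neg_eq_iff_eq_neg, ← theta2_add_one]
  congr 1
  ring

lemma theta2_eq_exp_mul_theta3 (τ z : ℂ) :
    theta2 τ z = cexp (π * I * (τ / 4 + z)) * theta3 τ (z + τ / 2) := by
  rw [theta2, theta3, ← Complex.exp_add]
  congr 2
  ring

lemma theta3_eq_exp_mul_theta2 (τ z : ℂ) :
    theta3 τ z = cexp (π * I * (τ / 4 + z)) * theta2 τ (z + τ / 2) := by
  rw [theta2_eq_exp_mul_theta3, theta3, theta3, add_assoc, add_halves, jacobiTheta₂_add_left',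
    ← mul_assoc, ← mul_assoc, ← Complex.exp_add, ← Complex.exp_add]
  ring_nf
  simp only [Complex.exp_zero, one_mul]

lemma bijective_sumElim_even_add_odd_add :
    Function.Bijective (Sum.elim (fun p : ℤ × ℤ ↦ (p.1 + p.2, p.1 - p.2))
      (fun p : ℤ × ℤ ↦ (p.1 + p.2 + 1, p.1 - p.2))) := by
  constructor
  · rintro (⟨a, b⟩ | ⟨a, b⟩) (⟨c, d⟩ | ⟨c, d⟩) h <;>
      simp only [Sum.elim_inl, Sum.elim_inr, Prod.mk.injEq, Sum.inl.injEq, Sum.inr.injEq,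
        reduceCtorEq] at h ⊢ <;>
      lia
  · rintro ⟨m, n⟩
    obtain ⟨k, hk | hk⟩ := Int.even_or_odd' (m + n)
    · exact ⟨Sum.inl (k, m - k), Prod.ext (by dsimp; lia) (by dsimp; lia)⟩
    · exact ⟨Sum.inr (k, k - n), Prod.ext (by dsimp; lia) (by dsimp; lia)⟩

lemma hasSum_of_even_add_of_odd_add {M : Type*} [AddCommMonoid M] [TopologicalSpace M]
    [ContinuousAdd M] {f : ℤ × ℤ → M} {a b : M}
    (heven : HasSum (fun p : ℤ × ℤ ↦ f (p.1 + p.2, p.1 - p.2)) a)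
    (hodd : HasSum (fun p : ℤ × ℤ ↦ f (p.1 + p.2 + 1, p.1 - p.2)) b) : HasSum f (a + b) :=
  (Equiv.ofBijective _ bijective_sumElim_even_add_odd_add).hasSum_iff.mp (HasSum.sum heven hodd)

variable {τ : ℂ}

lemma hasSum_theta3 (hτ : 0 < τ.im) (z : ℂ) :
    HasSum (fun n : ℤ ↦ cexp (2 * π * I * n * z + π * I * n ^ 2 * τ)) (theta3 τ z) :=
  hasSum_jacobiTheta₂_term z hτ

lemma hasSum_theta2 (hτ : 0 < τ.im) (z : ℂ) :
    HasSum (fun n : ℤ ↦ cexp (2 * π * I * (n + 1 / 2) * z + π * I * (n + 1 / 2) ^ 2 * τ))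
      (theta2 τ z) := by
  rw [theta2_eq_exp_mul_theta3]
  refine ((hasSum_theta3 hτ (z + τ / 2)).mul_left _).congr_fun fun n ↦ ?_
  rw [← Complex.exp_add]
  congr 1
  ring

theorem theta3_mul_theta3 (hτ : 0 < τ.im) (x y : ℂ) :
    theta3 τ x * theta3 τ y = theta3 (2 * τ) (x + y) * theta3 (2 * τ) (x - y) +
      theta2 (2 * τ) (x + y) * theta2 (2 * τ) (x - y) := by
  have h2τ : 0 < (2 * τ).im := by simpa using hτ
  have hasSum_mul {f g : ℤ → ℂ} {a b : ℂ} (hf : HasSum f a) (hg : HasSum g b) :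
      HasSum (fun p : ℤ × ℤ ↦ f p.1 * g p.2) (a * b) :=
    hf.mul hg (summable_mul_of_summable_norm hf.summable.norm hg.summable.norm)
  refine (hasSum_mul (hasSum_theta3 hτ x) (hasSum_theta3 hτ y)).unique
    (hasSum_of_even_add_of_odd_add ?_ ?_)
  · convert hasSum_mul (hasSum_theta3 h2τ (x + y)) (hasSum_theta3 h2τ (x - y)) using 2
    simp only [← Complex.exp_add]
    push_cast
    ring_nf
  · convert hasSum_mul (hasSum_theta2 h2τ (x + y)) (hasSum_theta2 h2τ (x - y)) using 2
    simp only [← Complex.exp_add]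
    push_cast
    ring_nf

theorem theta4_mul_theta4 (hτ : 0 < τ.im) (x y : ℂ) :
    theta4 τ x * theta4 τ y = theta3 (2 * τ) (x + y) * theta3 (2 * τ) (x - y) -
      theta2 (2 * τ) (x + y) * theta2 (2 * τ) (x - y) := by
  rw [← theta3_add_half, ← theta3_add_half, theta3_mul_theta3 hτ, add_add_add_comm, add_halves,
    add_sub_add_right_eq_sub, theta3_add_one, theta2_add_one, neg_mul, ← sub_eq_add_neg]

theorem theta3_mul_theta4 (hτ : 0 < τ.im) (x y : ℂ) :
    theta3 τ x * theta4 τ y = theta4 (2 * τ) (x + y) * theta4 (2 * τ) (x - y) -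
      theta1 (2 * τ) (x + y) * theta1 (2 * τ) (x - y) := by
  rw [← theta3_add_half, theta3_mul_theta3 hτ, ← add_assoc, ← sub_sub, theta3_add_half,
    theta3_sub_half, theta2_add_half, theta2_sub_half, neg_mul, ← sub_eq_add_neg]

theorem theta2_mul_theta2 (hτ : 0 < τ.im) (x y : ℂ) :
    theta2 τ x * theta2 τ y = theta2 (2 * τ) (x + y) * theta3 (2 * τ) (x - y) +
      theta3 (2 * τ) (x + y) * theta2 (2 * τ) (x - y) := by
  have hexp : cexp (π * I * (τ / 4 + x)) * cexp (π * I * (τ / 4 + y)) =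
      cexp (π * I * (2 * τ / 4 + (x + y))) := by
    rw [← Complex.exp_add]
    congr 1
    ring
  have hsum : x + τ / 2 + (y + τ / 2) = x + y + 2 * τ / 2 := by ring
  rw [theta2_eq_exp_mul_theta3 τ, theta2_eq_exp_mul_theta3 τ, mul_mul_mul_comm, hexp,
    theta3_mul_theta3 hτ, hsum, add_sub_add_right_eq_sub, theta2_eq_exp_mul_theta3 (2 * τ) (x + y),
    theta3_eq_exp_mul_theta2 (2 * τ) (x + y)]
  ring

theorem theta1_mul_theta1 (hτ : 0 < τ.im) (x y : ℂ) :
    theta1 τ x * theta1 τ y = theta3 (2 * τ) (x + y) * theta2 (2 * τ) (x - y) -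
      theta2 (2 * τ) (x + y) * theta3 (2 * τ) (x - y) := by
  rw [← neg_mul_neg, ← theta2_add_half, ← theta2_add_half, theta2_mul_theta2 hτ, add_add_add_comm,
    add_halves, add_sub_add_right_eq_sub, theta3_add_one, theta2_add_one]
  ring

theorem theta1_sq_mul_theta2_sq_sub (hτ : 0 < τ.im) (u v : ℂ) :
    theta1 τ u ^ 2 * theta2 τ v ^ 2 - theta2 τ u ^ 2 * theta1 τ v ^ 2 =
      theta2 τ 0 ^ 2 * (theta1 τ (u + v) * theta1 τ (u - v)) := by
  simp only [sq, theta1_mul_theta1 hτ, theta2_mul_theta2 hτ]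
  ring_nf

theorem theta1_sq_mul_theta3_sq_sub (hτ : 0 < τ.im) (u v : ℂ) :
    theta1 τ u ^ 2 * theta3 τ v ^ 2 - theta3 τ u ^ 2 * theta1 τ v ^ 2 =
      theta3 τ 0 ^ 2 * (theta1 τ (u + v) * theta1 τ (u - v)) := by
  simp only [sq, theta1_mul_theta1 hτ, theta3_mul_theta3 hτ]
  ring_nf

theorem theta1_sq_mul_theta4_sq_sub (hτ : 0 < τ.im) (u v : ℂ) :
    theta1 τ u ^ 2 * theta4 τ v ^ 2 - theta4 τ u ^ 2 * theta1 τ v ^ 2 =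
      theta4 τ 0 ^ 2 * (theta1 τ (u + v) * theta1 τ (u - v)) := by
  simp only [sq, theta1_mul_theta1 hτ, theta4_mul_theta4 hτ]
  ring_nf

lemma theta1_zero (hτ : 0 < τ.im) : theta1 τ 0 = 0 := by
  rw [← mul_self_eq_zero, theta1_mul_theta1 hτ, add_zero, sub_zero, mul_comm, sub_self]

lemma theta3_zero_mul_theta4_zero (hτ : 0 < τ.im) :
    theta3 τ 0 * theta4 τ 0 = theta4 (2 * τ) 0 ^ 2 := by
  have h2τ : 0 < (2 * τ).im := by simpa using hτ
  rw [theta3_mul_theta4 hτ, add_zero, sub_zero, theta1_zero h2τ, mul_zero, sub_zero, sq]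

lemma theta3_zero_sq_add_theta4_zero_sq (hτ : 0 < τ.im) :
    theta3 τ 0 ^ 2 + theta4 τ 0 ^ 2 = 2 * theta3 (2 * τ) 0 ^ 2 := by
  rw [sq, sq, theta3_mul_theta3 hτ, theta4_mul_theta4 hτ, add_zero, sub_zero]
  ring

lemma tendsto_theta3_zero : Tendsto (theta3 · 0) (comap im atTop) (𝓝 1) := by
  have hexp : Tendsto (fun τ : ℂ ↦ Real.exp (-π * τ.im)) (comap im atTop) (𝓝 0) :=
    Real.tendsto_exp_atBot.comp
      (tendsto_comap.const_mul_atTop_of_neg (neg_neg_of_pos Real.pi_pos))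
  have hsub := isBigO_at_im_infty_jacobiTheta_sub_one.trans_tendsto hexp
  exact (tendsto_sub_nhds_zero_iff.mp hsub).congr jacobiTheta_eq_jacobiTheta₂

theorem theta4_zero_ne_zero (hτ : 0 < τ.im) : theta4 τ 0 ≠ 0 := by
  intro h
  have him (n : ℕ) : (2 ^ n * τ).im = 2 ^ n * τ.im := by
    rw [← Complex.ofReal_ofNat, ← Complex.ofReal_pow, Complex.im_ofReal_mul]
  have hpos (n : ℕ) : 0 < (2 ^ n * τ).im := by
    rw [him]
    positivity
  have hvanish (n : ℕ) : theta4 (2 ^ n * τ) 0 = 0 := by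
    induction n with
    | zero => simpa using h
    | succ n ih =>
      rw [← sq_eq_zero_iff, pow_succ' 2 n, mul_assoc, ← theta3_zero_mul_theta4_zero (hpos n), ih,
        mul_zero]
  have hdouble (n : ℕ) :
      theta3 (2 ^ n * τ) 0 ^ 2 = 2 * theta3 (2 ^ (n + 1) * τ) 0 ^ 2 := by
    rw [pow_succ' 2 n, mul_assoc, ← theta3_zero_sq_add_theta4_zero_sq (hpos n), hvanish]
    ring
  have hlim : Tendsto (fun n : ℕ ↦ theta3 (2 ^ n * τ) 0 ^ 2) atTop (𝓝 1) := by
    have him_atTop : Tendsto (fun n : ℕ ↦ (2 ^ n * τ).im) atTop atTop := by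
      simp only [him]
      exact (tendsto_pow_atTop_atTop_of_one_lt one_lt_two).atTop_mul_const hτ
    simpa using (tendsto_theta3_zero.comp (tendsto_comap_iff.mpr him_atTop)).pow 2
  have hlim_double := ((tendsto_add_atTop_iff_nat 1).mpr hlim).const_mul 2
  simp only [← hdouble] at hlim_double
  simpa using tendsto_nhds_unique hlim hlim_double

theorem theta3_zero_ne_zero (hτ : 0 < τ.im) : theta3 τ 0 ≠ 0 := by
  have h2τ : 0 < (2 * τ).im := by simpa using hτ
  refine left_ne_zero_of_mul (b := theta4 τ 0) ?_
  rw [theta3_zero_mul_theta4_zero hτ]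
  exact pow_ne_zero 2 (theta4_zero_ne_zero h2τ)

lemma theta2_functional_equation (hτ : τ ≠ 0) (z : ℂ) :
    theta2 τ z =
      1 / (-I * τ) ^ (1 / 2 : ℂ) * cexp (-π * I * z ^ 2 / τ) * theta4 (-1 / τ) (z / τ) := by
  have hexp : cexp (π * I * (τ / 4 + z)) * cexp (-π * I * (z + τ / 2) ^ 2 / τ) =
      cexp (-π * I * z ^ 2 / τ) := by
    rw [← Complex.exp_add]
    congr 1
    field_simp
    ring
  have harg : (z + τ / 2) / τ = z / τ + 1 / 2 := by field_simp
  rw [theta2_eq_exp_mul_theta3, theta3, jacobiTheta₂_functional_equation, harg, theta4, ← hexp]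
  ring

theorem theta2_zero_ne_zero (hτ : 0 < τ.im) : theta2 τ 0 ≠ 0 := by
  have hτ0 : τ ≠ 0 := by
    rintro rfl
    simp at hτ
  have hinv : 0 < (-1 / τ).im := by
    rw [neg_div, neg_im, one_div, inv_im, neg_div, neg_neg]
    exact div_pos hτ (normSq_pos.mpr hτ0)
  have hsqrt : (-I * τ) ^ (1 / 2 : ℂ) ≠ 0 := by
    simp [cpow_eq_zero_iff, hτ0]
  rw [theta2_functional_equation hτ0, zero_div]
  exact mul_ne_zero (mul_ne_zero (one_div_ne_zero hsqrt) (exp_ne_zero _))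
    (theta4_zero_ne_zero hinv)

end Theta

lemma sq_div_sq_mul_sub_sq_eq {K : Type*} [Field K] {s t s' t' c P : K}
    (hs' : s' ≠ 0) (ht' : t' ≠ 0) (hc : c ≠ 0)
    (h : s ^ 2 * t' ^ 2 - t ^ 2 * s' ^ 2 = c ^ 2 * P) :
    t' ^ 2 / c ^ 2 * ((s / s') ^ 2 - (t / t') ^ 2) = P / s' ^ 2 := by
  field_simp
  linear_combination h

/-- The theta-parametrized point `(Z₀,Z₁,Z₂,Z₃)` lies on the biquadratic curve
`(Z₀²−Z₁²)/a = (Z₀²−Z₂²)/b = (Z₀²−Z₃²)/c` with `a = θ₂(0)²/θ₂(η)²`,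
`b = θ₃(0)²/θ₃(η)²`, `c = θ₄(0)²/θ₄(η)²`. -/
theorem stmt_16 (τ : ℂ) (hτ : 0 < τ.im) (η z : ℂ)
    (h1 : theta1 τ η ≠ 0) (h2 : theta2 τ η ≠ 0)
    (h3 : theta3 τ η ≠ 0) (h4 : theta4 τ η ≠ 0)
    (Z0 Z1 Z2 Z3 : ℂ)
    (hZ0 : Z0 = theta1 τ (2 * z) / theta1 τ η)
    (hZ1 : Z1 = theta2 τ (2 * z) / theta2 τ η)
    (hZ2 : Z2 = theta3 τ (2 * z) / theta3 τ η)
    (hZ3 : Z3 = theta4 τ (2 * z) / theta4 τ η) :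
    (theta2 τ η) ^ 2 / (theta2 τ 0) ^ 2 * (Z0 ^ 2 - Z1 ^ 2)
        = (theta3 τ η) ^ 2 / (theta3 τ 0) ^ 2 * (Z0 ^ 2 - Z2 ^ 2) ∧
    (theta3 τ η) ^ 2 / (theta3 τ 0) ^ 2 * (Z0 ^ 2 - Z2 ^ 2)
        = (theta4 τ η) ^ 2 / (theta4 τ 0) ^ 2 * (Z0 ^ 2 - Z3 ^ 2) := by
  have h2η := sq_div_sq_mul_sub_sq_eq h1 h2 (theta2_zero_ne_zero hτ)
    (theta1_sq_mul_theta2_sq_sub hτ (2 * z) η)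
  have h3η := sq_div_sq_mul_sub_sq_eq h1 h3 (theta3_zero_ne_zero hτ)
    (theta1_sq_mul_theta3_sq_sub hτ (2 * z) η)
  have h4η := sq_div_sq_mul_sub_sq_eq h1 h4 (theta4_zero_ne_zero hτ)
    (theta1_sq_mul_theta4_sq_sub hτ (2 * z) η)
  subst hZ0 hZ1 hZ2 hZ3
  exact ⟨h2η.trans h3η.symm, h3η.trans h4η.symm⟩
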